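/- Let (F₁,F₂) be a nonsingular pair of quadratic forms in s variables with integer coefficients. For every ε > 0 there is a constant C = C(ε, F₁, F₂) such that for all q ∈ ℕ and all u ∈ ℤ^s: |D_q(u)| ≤ C q^{s/2 + 2 + ε}. -/

import Mathlib

open MeasureTheory Real Matrix Finset

noncomputable section

/-- `e(x) = exp(2πix)`. -/
def e2pi (x : ℝ) : ℂ := Complex.exp (2 * Real.pi * Complex.I * x)

/-- Euclidean norm on `ℝ²`. -/
def nrm2 (x : ℝ × ℝ) : ℝ := Real.sqrt (x.1 ^ 2 + x.2 ^ 2)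

/-- Dot product on `ℝ²`. -/
def dot2 (x y : ℝ × ℝ) : ℝ := x.1 * y.1 + x.2 * y.2

/-- `x^⊥ = (x₂, -x₁)`. -/
def perp2 (x : ℝ × ℝ) : ℝ × ℝ := (x.2, -x.1)

/-- `δ_n` for `n ∈ ℤ²`. -/
def deltaInt (n : ℤ × ℤ) : ℂ := if n = 0 then 1 else 0

/-- `h(y,z) = Σ_{j ≥ 1} (1/(yj)) (ω(yj) − ω(|z|/(yj)))`. -/
def hFun (ω : ℝ → ℝ) (y z : ℝ) : ℝ :=
  ∑' j : ℕ+, (1 / (y * ((j : ℕ) : ℝ))) *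
    (ω (y * ((j : ℕ) : ℝ)) - ω (|z| / (y * ((j : ℕ) : ℝ))))

/-- `c = (∫_{ℝ²} ω(|x|) dx)⁻¹`. -/
def cConst (ω : ℝ → ℝ) : ℝ := (∫ x : ℝ × ℝ, ω (nrm2 x))⁻¹

/-- The function `p_{1,q}`. -/
def p1 (ω ω₀ : ℝ → ℝ) (Q : ℝ) (q : ℕ) (w : ℝ × ℝ) : ℂ :=
  -(cConst ω / Q : ℝ) * ∫ x : ℝ × ℝ,
    (((ω₀ (nrm2 x / Q ^ ((3 : ℝ) / 2)) *
      ∑' j : ℕ+, (1 / ((q : ℝ) * ((j : ℕ) : ℝ)) ^ 2) *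
        ω (nrm2 x / (((j : ℕ) : ℝ) * (q : ℝ) * Q ^ ((1 : ℝ) / 2)))) : ℝ) : ℂ) *
      e2pi (-(dot2 w x))

/-- The function `p_{2,r,k,q}` (with `q` allowed to be a real parameter). -/
def p2 (ω ω₀ : ℝ → ℝ) (Q : ℝ) (r : ℤ × ℤ) (k : ℕ) (q : ℝ) (w : ℝ × ℝ) : ℂ :=
  ((cConst ω / Q ^ 3 : ℝ) : ℂ) * ∫ x : ℝ × ℝ,
    (((ω₀ (nrm2 x / Q ^ ((3 : ℝ) / 2)) *
      hFun ω ((k : ℝ) * q / Q) (((r.1 : ℝ) * x.1 + (r.2 : ℝ) * x.2) / Q ^ 2)) : ℝ) : ℂ) *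
      e2pi (-(dot2 w x))

/-- The lattice `Λ(a,q) = {k a + q y}` as a subset of `ℤ²`. -/
def Lambda (a : ℤ × ℤ) (q : ℕ) : Set (ℤ × ℤ) :=
  {v | ∃ k : ℤ, ∃ y : ℤ × ℤ, v = (k * a.1 + (q : ℤ) * y.1, k * a.2 + (q : ℤ) * y.2)}

/-- `k(r) = gcd(r₁,r₂)/gcd(gcd(r₁,r₂),q)`. -/
def kOf (r : ℤ × ℤ) (q : ℕ) : ℕ := Int.gcd r.1 r.2 / Nat.gcd (Int.gcd r.1 r.2) q

/-- The function `p_{Λ(a,q)}`. -/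
def pLambda (ω ω₀ : ℝ → ℝ) (Q : ℝ) (q : ℕ) (a : ℤ × ℤ) (w : ℝ × ℝ) : ℂ :=
  p1 ω ω₀ Q q w +
    ∑' r : ℤ × ℤ,
      Set.indicator {r : ℤ × ℤ | r ∈ Lambda a q ∧ r ≠ 0}
        (fun r => ((ω (nrm2 ((r.1 : ℝ), (r.2 : ℝ)) / Q ^ ((1 : ℝ) / 2)) : ℝ) : ℂ) *
          p2 ω ω₀ Q r (kOf r q) (q : ℝ) w) r

/-- Reduced residues `a mod q` (canonical representatives) with `gcd(a₁,a₂,q)=1`. -/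
def residues (q : ℕ) : Finset (ℕ × ℕ) :=
  ((Finset.range q) ×ˢ (Finset.range q)).filter (fun a => Nat.gcd (Nat.gcd a.1 a.2) q = 1)

/-- Normalized directional derivative along `ξ`. -/
def dirDeriv (ξ : ℝ × ℝ) (f : ℝ × ℝ → ℂ) : ℝ × ℝ → ℂ :=
  fun w => fderiv ℝ f w (ξ.1 / nrm2 ξ, ξ.2 / nrm2 ξ)

/-- Fourier transform `ω̂₀(t) = ∫ ω₀(x) e(−xt) dx`. -/
def fourierW0 (ω₀ : ℝ → ℝ) (t : ℝ) : ℂ := ∫ x : ℝ, ((ω₀ x : ℝ) : ℂ) * e2pi (-(x * t))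

/-- `|M(w)x|` for the 3×2 matrix `M(w)`. -/
def Mnorm (Q : ℝ) (w : ℝ × ℝ) (x : ℝ × ℝ) : ℝ :=
  Real.sqrt (x.1 ^ 2 / Q + x.2 ^ 2 / Q + Q ^ 2 * (w.1 * x.2 - w.2 * x.1) ^ 2)

/-- `μ_{M(w)}(Λ(a,q))`: infimum of `|M(w)x|` over nonzero lattice points. -/
def muM (Q : ℝ) (w : ℝ × ℝ) (a : ℤ × ℤ) (q : ℕ) : ℝ :=
  sInf {t : ℝ | ∃ v : ℤ × ℤ, v ∈ Lambda a q ∧ v ≠ 0 ∧ t = Mnorm Q w ((v.1 : ℝ), (v.2 : ℝ))}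

/-- Quadratic form attached to an integer matrix, over any commutative ring. -/
def quadEval {s : ℕ} {R : Type*} [CommRing R] (M : Matrix (Fin s) (Fin s) ℤ)
    (x : Fin s → R) : R :=
  ∑ i, ∑ j, (M i j : R) * x i * x j

/-- `e_q(n) = exp(2πin/q)` for an integer `n`. -/
def eqc (q : ℕ) (n : ℤ) : ℂ := e2pi ((n : ℝ) / (q : ℝ))

/-- The exponential sum `D_q(u)`. -/
def Dq (s : ℕ) (M₁ M₂ : Matrix (Fin s) (Fin s) ℤ) (q : ℕ) (u : Fin s → ℤ) : ℂ :=
  ∑ a ∈ residues q, ∑ b ∈ Fintype.piFinset (fun _ : Fin s => Finset.range q),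
    eqc q ((a.1 : ℤ) * quadEval M₁ (fun i => (b i : ℤ)) +
      (a.2 : ℤ) * quadEval M₂ (fun i => (b i : ℤ)) + ∑ i, (b i : ℤ) * u i)

/-- The exponential sum `S_{q,dc}(u)`. -/
def Sq (s : ℕ) (M₁ M₂ : Matrix (Fin s) (Fin s) ℤ) (q d : ℕ) (c : ℤ × ℤ)
    (u : Fin s → ℤ) : ℂ :=
  ∑ a ∈ (residues q).filter
      (fun a => (q : ℤ) ∣ (d : ℤ) * (c.1 * (a.2 : ℤ) - c.2 * (a.1 : ℤ))),
    ∑ b ∈ Fintype.piFinset (fun _ : Fin s => Finset.range q),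
      eqc q ((a.1 : ℤ) * quadEval M₁ (fun i => (b i : ℤ)) +
        (a.2 : ℤ) * quadEval M₂ (fun i => (b i : ℤ)) + ∑ i, (b i : ℤ) * u i)

/-- The pair of quadratic forms given by `M₁, M₂` is nonsingular: at every nonzero
complex common zero the gradients (equivalently `M₁x`, `M₂x`) are linearly independent. -/
def NonsingularPair (s : ℕ) (M₁ M₂ : Matrix (Fin s) (Fin s) ℤ) : Prop :=
  ∀ x : Fin s → ℂ, x ≠ 0 →
    quadEval M₁ x = 0 → quadEval M₂ x = 0 →
    LinearIndependent ℂ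
      ![(M₁.map (fun z : ℤ => (z : ℂ))).mulVec x, (M₂.map (fun z : ℤ => (z : ℂ))).mulVec x]

/-- Euclidean norm on `Fin m → ℝ`. -/
def enorm' {m : ℕ} (v : Fin m → ℝ) : ℝ := Real.sqrt (∑ i, v i ^ 2)

end

/-!
Let `A`, `B` be the Hessians of the two forms. By Cauchy–Schwarz over `a` and Weyl differencing in
`b`, `‖D_q(u)‖²` is at most `q ^ (s + 2)` times the number of pairs `(a, h)` mod `q` with `a`
unimodular and `(a₁A + a₂B)h = 0`, so this number has to be `O(q ^ (2 + ε))`. It is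
submultiplicative in `q` by the Chinese remainder theorem; as in the divisor bound, it is enough
to have `O((k + 1) q ^ 2)` for `q = p ^ k`, uniformly in `p`.

Modulo a prime power one may take `a = (t, 1)` or `a = (1, t)`. Put `f(t) = det (tA + B)`. At a
complex root of `f`, nonsingularity makes the form `A` anisotropic on `ker (tA + B)`. So the kernel
is a line, spanned by `v` say, the adjugate is a nonzero multiple of `v vᵀ`, and
`f'(t) = tr (adj (tA + B) A)` does not vanish. Hence `f` is separable and the ideal `(f, f')` of
`ℤ[X]` contains an integer `Δ ≠ 0`. Some entry of the adjugate divides all the others mod `p ^ k`,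
hence divides both `f(t)` and `f'(t)` and so `Δ`. Consequently the kernel of `tA + B` has at most
`|Δ| ^ s` times as many elements as the annihilator of `f(t)`. Finally `f` has boundedly many zeros
mod every power of `p`: by Hensel uniqueness if `p ∤ Δ`, and otherwise because zeros congruent
mod `Δ²` differ by an element killed by `Δ`. This bounds the sum over `t` of the annihilators.
-/

open scoped Polynomial

section Pencil

variable {n R S : Type*} [Fintype n] [DecidableEq n] [CommRing R] [CommRing S]

theorem derivative_det (M : Matrix n n R[X]) :
    Polynomial.derivative M.det = (M.adjugate * M.map Polynomial.derivative).trace := by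
  have trace_term (i : n) : (M.adjugate * M.map Polynomial.derivative) i i =
      (M.updateCol i fun k => Polynomial.derivative (M k i)).det := by
    rw [← Matrix.cramer_apply, Matrix.cramer_eq_adjugate_mulVec]
    rfl
  simp only [Matrix.trace, Matrix.diag_apply, trace_term, Matrix.det_apply]
  rw [Finset.sum_comm, Polynomial.derivative_sum]
  refine Finset.sum_congr rfl fun σ _ => ?_
  rw [← Finset.smul_sum, Units.smul_def, Units.smul_def, map_zsmul,
    Polynomial.derivative_prod_finset]
  congr 1
  refine Finset.sum_congr rfl fun i _ => ?_
  rw [← Finset.prod_erase_mul _ _ (Finset.mem_univ i), Matrix.updateCol_self]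
  congr 1
  exact Finset.prod_congr rfl fun j hj => (Matrix.updateCol_ne (Finset.ne_of_mem_erase hj)).symm

/-- The determinant of the pencil `X * A + B`. For Hessians `A`, `B` of quadratic forms its roots
are the singular members of the pencil of quadrics spanned by the forms. -/
noncomputable def pencilDet (A B : Matrix n n R) : R[X] :=
  (Polynomial.X (R := R) • A.map Polynomial.C + B.map Polynomial.C).det

theorem map_aeval_pencil [Algebra R S] (A B : Matrix n n R) (t : S) :
    (Polynomial.aeval t).toRingHom.mapMatrix
      (Polynomial.X (R := R) • A.map Polynomial.C + B.map Polynomial.C) =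
      t • A.map (algebraMap R S) + B.map (algebraMap R S) := by
  ext i j
  simpa using mul_comm _ _

theorem aeval_pencilDet [Algebra R S] (A B : Matrix n n R) (t : S) :
    Polynomial.aeval t (pencilDet A B) =
      (t • A.map (algebraMap R S) + B.map (algebraMap R S)).det := by
  rw [← map_aeval_pencil, ← RingHom.map_det]
  rfl

theorem aeval_derivative_pencilDet [Algebra R S] (A B : Matrix n n R) (t : S) :
    Polynomial.aeval t (Polynomial.derivative (pencilDet A B)) =
      ((t • A.map (algebraMap R S) + B.map (algebraMap R S)).adjugate *
        A.map (algebraMap R S)).trace := by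
  have derivative_pencil :
      (Polynomial.X (R := R) • A.map Polynomial.C + B.map Polynomial.C).map
        Polynomial.derivative = A.map Polynomial.C := by
    ext i j : 2
    simp
  have aeval_C : (Polynomial.aeval t).toRingHom.mapMatrix (A.map Polynomial.C) =
      A.map (algebraMap R S) := by
    ext i j
    simp
  rw [pencilDet, derivative_det, derivative_pencil, ← map_aeval_pencil, ← RingHom.map_adjugate,
    ← aeval_C, ← map_mul]
  exact AddMonoidHom.map_trace (Polynomial.aeval t).toRingHom _

theorem map_pencilDet (φ : R →+* S) (A B : Matrix n n R) :
    (pencilDet A B).map φ = pencilDet (A.map φ) (B.map φ) := by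
  rw [pencilDet, pencilDet, ← Polynomial.coe_mapRingHom, RingHom.map_det]
  congr 1
  ext i j : 2
  simp

theorem exists_ne_zero_C_mem_span_of_isCoprime_map {K : Type*} [Field K] {φ : R →+* K}
    (hφ : Function.Injective φ) {f g : R[X]} (h : IsCoprime (f.map φ) (g.map φ)) :
    ∃ r ≠ 0, Polynomial.C r ∈ Ideal.span {f, g} := by
  by_cases hdeg : f.natDegree ≠ 0 ∨ g.natDegree ≠ 0
  · obtain ⟨a, b, -, -, hab⟩ :=
      Polynomial.exists_mul_add_mul_eq_C_resultant f g le_rfl le_rfl hdeg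
    refine ⟨f.resultant g, fun h0 => ?_,
      Ideal.mem_span_pair.2 ⟨a, b, by rw [mul_comm a, mul_comm b, hab]⟩⟩
    refine Polynomial.resultant_ne_zero _ _ h ?_
    rw [Polynomial.natDegree_map_eq_of_injective hφ, Polynomial.natDegree_map_eq_of_injective hφ,
      Polynomial.resultant_map_map, h0, map_zero]
  · push Not at hdeg
    obtain ⟨r, rfl⟩ := Polynomial.natDegree_eq_zero.1 hdeg.1
    obtain ⟨t, rfl⟩ := Polynomial.natDegree_eq_zero.1 hdeg.2
    by_cases hr : r = 0
    · refine ⟨t, fun ht => ?_, Ideal.subset_span (by simp)⟩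
      simp only [hr, ht, Polynomial.C_0, Polynomial.map_zero] at h
      exact not_isCoprime_zero_zero h
    · exact ⟨r, hr, Ideal.subset_span (by simp)⟩

end Pencil

section Field

variable {n K : Type*} [Fintype n] [Field K]

theorem exists_isotropic_in_span [IsAlgClosed K] (A : Matrix n n K) (v w : n → K) :
    ∃ x y : K, (x ≠ 0 ∨ y ≠ 0) ∧ (x • v + y • w) ⬝ᵥ (A *ᵥ (x • v + y • w)) = 0 := by
  by_cases hv : v ⬝ᵥ (A *ᵥ v) = 0
  · exact ⟨1, 0, by simp, by simpa using hv⟩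
  · obtain ⟨x, hx⟩ := IsAlgClosed.exists_root
      (Polynomial.C (v ⬝ᵥ (A *ᵥ v)) * Polynomial.X ^ 2 +
        Polynomial.C (v ⬝ᵥ (A *ᵥ w) + w ⬝ᵥ (A *ᵥ v)) * Polynomial.X +
        Polynomial.C (w ⬝ᵥ (A *ᵥ w))) (by rw [Polynomial.degree_quadratic hv]; decide)
    refine ⟨x, 1, by simp, ?_⟩
    simp only [Polynomial.IsRoot, Polynomial.eval_add, Polynomial.eval_mul, Polynomial.eval_pow,
      Polynomial.eval_C, Polynomial.eval_X] at hx
    rw [← hx]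
    simp only [one_smul, Matrix.mulVec_add, Matrix.mulVec_smul, dotProduct_add, add_dotProduct,
      smul_dotProduct, dotProduct_smul, smul_eq_mul]
    ring

theorem exists_eq_smul_of_anisotropic_ker [IsAlgClosed K] {N A : Matrix n n K}
    (hA : ∀ z, z ≠ 0 → N *ᵥ z = 0 → z ⬝ᵥ (A *ᵥ z) ≠ 0) {v : n → K} (hv0 : v ≠ 0)
    (hv : N *ᵥ v = 0) {x : n → K} (hx : N *ᵥ x = 0) : ∃ c : K, x = c • v := by
  obtain ⟨a, b, hab, hiso⟩ := exists_isotropic_in_span A v x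
  have hzero : a • v + b • x = 0 := by
    by_contra hne
    exact hA _ hne (by simp [Matrix.mulVec_add, Matrix.mulVec_smul, hv, hx]) hiso
  have hb : b ≠ 0 := by
    rintro rfl
    simp_all
  refine ⟨-(b⁻¹ * a), ?_⟩
  rw [neg_smul, mul_smul, eq_neg_iff_add_eq_zero, ← smul_right_injective _ hb |>.eq_iff]
  simp only [smul_add, smul_smul, smul_zero, mul_inv_cancel_left₀ hb]
  rw [add_comm, hzero]

variable [DecidableEq n]

theorem exists_adjugate_apply_ne_zero {N : Matrix n n K} {j : n}
    (hN : ∀ x, N *ᵥ x = 0 → x j = 0 → x = 0) : ∃ i, N.adjugate j i ≠ 0 := by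
  by_contra! hadj
  have hdet : N.det = 0 := by
    have := congrFun (congrFun N.adjugate_mul j) j
    simpa [Matrix.mul_apply, hadj] using this.symm
  have single_mem_range (i : n) : Pi.single i 1 ∈ LinearMap.range N.mulVecLin := by
    have hi := hadj i
    rw [Matrix.adjugate_apply] at hi
    obtain ⟨x, hx0, hx⟩ := Matrix.exists_mulVec_eq_zero_iff.2 hi
    have hxj : x j = 0 := by
      simpa [Matrix.mulVec, dotProduct, Pi.single_apply] using congrFun hx i
    have hNx : N *ᵥ x = Pi.single i ((N *ᵥ x) i) := by
      ext k
      obtain rfl | hk := eq_or_ne k i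
      · simp
      · simpa [Matrix.mulVec, Matrix.updateRow_ne hk, hk] using congrFun hx k
    have hne : (N *ᵥ x) i ≠ 0 := fun h => hx0 (hN x (by rw [hNx, h, Pi.single_zero]) hxj)
    refine ⟨((N *ᵥ x) i)⁻¹ • x, ?_⟩
    rw [Matrix.mulVecLin_apply, Matrix.mulVec_smul, hNx, ← Pi.single_smul']
    simp [hne]
  have hrange : LinearMap.range N.mulVecLin = ⊤ := by
    rw [eq_top_iff, ← (Pi.basisFun K n).span_eq, Submodule.span_le, Set.range_subset_iff]
    simpa using single_mem_range
  have hunit := Matrix.mulVec_surjective_iff_isUnit.1 (LinearMap.range_eq_top.1 hrange)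
  rw [Matrix.isUnit_iff_isUnit_det, hdet] at hunit
  exact not_isUnit_zero hunit

theorem adjugate_eq_smul_vecMulVec {N : Matrix n n K} (hN : N.IsSymm) (hdet : N.det = 0)
    {v : n → K} (hv0 : v ≠ 0) (hker : ∀ x, N *ᵥ x = 0 → ∃ c : K, x = c • v) :
    ∃ c : K, c ≠ 0 ∧ N.adjugate = c • Matrix.vecMulVec v v := by
  obtain ⟨j, hj⟩ := Function.ne_iff.1 hv0
  have hj : v j ≠ 0 := hj
  have hcol (l : n) : ∃ c : K, (fun k => N.adjugate k l) = c • v := by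
    refine hker _ ?_
    have := N.mul_adjugate
    rw [hdet, zero_smul] at this
    ext i
    exact congrFun (congrFun this i) l
  choose c hc using hcol
  have hc' (k l : n) : N.adjugate k l = c l * v k := congrFun (hc l) k
  have hrow (l : n) : c l = c j / v j * v l := by
    have := hN.adjugate.apply l j
    rw [hc', hc'] at this
    field_simp
    exact this
  obtain ⟨i, hi⟩ := exists_adjugate_apply_ne_zero (N := N) (j := j) fun x hx hxj => by
    obtain ⟨b, rfl⟩ := hker x hx
    have hb : b = 0 := by simpa [hj] using hxj
    rw [hb, zero_smul]
  refine ⟨c j / v j, fun h0 => hi ?_, ?_⟩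
  · rw [hc', hrow, h0, zero_mul, zero_mul]
  · ext k l
    rw [hc', hrow, Matrix.smul_apply, Matrix.vecMulVec_apply, smul_eq_mul]
    ring

theorem trace_adjugate_mul_ne_zero [IsAlgClosed K] {N A : Matrix n n K} (hN : N.IsSymm)
    (hdet : N.det = 0) (hA : ∀ z, z ≠ 0 → N *ᵥ z = 0 → z ⬝ᵥ (A *ᵥ z) ≠ 0) :
    (N.adjugate * A).trace ≠ 0 := by
  obtain ⟨v, hv0, hv⟩ := Matrix.exists_mulVec_eq_zero_iff.2 hdet
  obtain ⟨c, hc, hadj⟩ := adjugate_eq_smul_vecMulVec hN hdet hv0 fun x hx =>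
    exists_eq_smul_of_anisotropic_ker hA hv0 hv hx
  rw [hadj, Matrix.smul_mul, Matrix.trace_smul, Matrix.vecMulVec_mul, Matrix.trace_vecMulVec,
    dotProduct_comm, ← Matrix.dotProduct_mulVec]
  exact smul_ne_zero hc (hA v hv0 hv)

theorem separable_pencilDet [IsAlgClosed K] {A B : Matrix n n K} (hA : A.IsSymm) (hB : B.IsSymm)
    (hAB : ∀ z, z ≠ 0 → z ⬝ᵥ (A *ᵥ z) = 0 → z ⬝ᵥ (B *ᵥ z) = 0 →
      LinearIndependent K ![A *ᵥ z, B *ᵥ z]) : (pencilDet A B).Separable := by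
  rw [Polynomial.Separable, Polynomial.isCoprime_iff_aeval_ne_zero_of_isAlgClosed K K]
  intro t
  rw [or_iff_not_imp_left, not_not, aeval_pencilDet, aeval_derivative_pencilDet]
  simp only [Algebra.algebraMap_self, RingHom.coe_id, Matrix.map_id]
  refine fun hdet => trace_adjugate_mul_ne_zero ((hA.smul t).add hB) hdet fun z hz0 hz hAz => ?_
  have hdep : t • (A *ᵥ z) + B *ᵥ z = 0 := by
    rw [← Matrix.smul_mulVec, ← Matrix.add_mulVec, hz]
  have hBz : z ⬝ᵥ (B *ᵥ z) = 0 := by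
    simpa [hAz] using congrArg (z ⬝ᵥ ·) hdep
  have := (LinearIndependent.pair_iff.1 (hAB z hz0 hAz hBz)) t 1 (by rw [one_smul, hdep])
  exact one_ne_zero this.2

end Field

theorem quadEval_eq_dotProduct_mulVec {s : ℕ} {R : Type*} [CommRing R]
    (M : Matrix (Fin s) (Fin s) ℤ) (x : Fin s → R) :
    quadEval M x = x ⬝ᵥ (M.map (Int.castRingHom R) *ᵥ x) := by
  simp only [quadEval, dotProduct, Matrix.mulVec, Finset.mul_sum, Matrix.map_apply]
  exact Finset.sum_congr rfl fun i _ => Finset.sum_congr rfl fun j _ => by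
    rw [eq_intCast]; ring

theorem NonsingularPair.symm {s : ℕ} {A B : Matrix (Fin s) (Fin s) ℤ}
    (hns : NonsingularPair s A B) : NonsingularPair s B A :=
  fun x hx hB hA => LinearIndependent.pair_symm_iff.1 (hns x hx hA hB)

theorem NonsingularPair.exists_C_mem_span {s : ℕ} {A B : Matrix (Fin s) (Fin s) ℤ}
    (hns : NonsingularPair s A B) (hA : A.IsSymm) (hB : B.IsSymm) :
    ∃ Δ : ℤ, Δ ≠ 0 ∧ Polynomial.C Δ ∈
      Ideal.span {pencilDet A B, Polynomial.derivative (pencilDet A B)} := by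
  refine exists_ne_zero_C_mem_span_of_isCoprime_map (Int.castRingHom ℂ).injective_int ?_
  rw [← Polynomial.derivative_map, map_pencilDet]
  refine separable_pencilDet (hA.map _) (hB.map _) fun z hz hAz hBz => hns z hz ?_ ?_
  · rw [quadEval_eq_dotProduct_mulVec, hAz]
  · rw [quadEval_eq_dotProduct_mulVec, hBz]

section Counting

theorem card_le_card_mul_card_image_of_sub_mem {G β : Type*} [AddGroup G] [DecidableEq β]
    {S T : Finset G} {f : G → β} (h : ∀ x ∈ S, ∀ y ∈ S, f x = f y → x - y ∈ T) :
    #S ≤ #T * #(S.image f) := by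
  refine Finset.card_le_mul_card_image S #T fun b hb => ?_
  obtain ⟨y, hy, rfl⟩ := Finset.mem_image.1 hb
  refine Finset.card_le_card_of_injOn (· - y) (fun x hx => ?_) (sub_left_injective.injOn)
  obtain ⟨hxS, hxy⟩ := Finset.mem_filter.1 hx
  exact h x hxS y hy hxy

theorem card_quotient_span_singleton {R : Type*} [CommRing R] [Fintype R] [DecidableEq R] (c : R) :
    Nat.card (R ⧸ Ideal.span {c}) = #{y : R | c * y = 0} := by
  have hrange : (AddMonoidHom.mulLeft c).range = (Ideal.span {c}).toAddSubgroup := by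
    ext x
    simp [Ideal.mem_span_singleton, dvd_def, eq_comm]
  calc Nat.card (R ⧸ Ideal.span {c}) = (AddMonoidHom.mulLeft c).range.index := by
        rw [hrange]; rfl
    _ = Nat.card (AddMonoidHom.mulLeft c).ker := AddSubgroup.index_range
    _ = #{y : R | c * y = 0} := by
        rw [← Fintype.card_subtype, ← Nat.card_eq_fintype_card]; rfl

theorem card_intCast_mul_eq_zero_le {q : ℕ} [NeZero q] {m : ℤ} (hm : m ≠ 0) :
    #{y : ZMod q | (m : ZMod q) * y = 0} ≤ m.natAbs := by
  refine le_trans (Finset.card_le_card fun y hy => ?_)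
    (IsAddCyclic.card_nsmul_eq_zero_le (α := ZMod q) (Int.natAbs_pos.2 hm))
  simp only [Finset.mem_filter, Finset.mem_univ, true_and] at hy ⊢
  rwa [natAbs_nsmul_eq_zero, zsmul_eq_mul]

theorem card_mul_eq_zero_le_gcd {q : ℕ} [NeZero q] (c : ZMod q) :
    #{y : ZMod q | c * y = 0} ≤ c.val.gcd q := by
  refine le_trans (Finset.card_le_card fun y hy => ?_)
    (IsAddCyclic.card_nsmul_eq_zero_le (α := ZMod q) (Nat.gcd_pos_of_pos_right _ (NeZero.pos q)))
  simp only [Finset.mem_filter, Finset.mem_univ, true_and] at hy ⊢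
  refine addOrderOf_dvd_iff_nsmul_eq_zero.1 (Nat.dvd_gcd ?_ ?_) <;>
    rw [addOrderOf_dvd_iff_nsmul_eq_zero, nsmul_eq_mul]
  · rw [ZMod.natCast_zmod_val, hy]
  · rw [ZMod.natCast_self, zero_mul]

theorem card_castHom_preimage_le {q d : ℕ} [NeZero q] (hd : d ∣ q) (S : Finset (ZMod d)) :
    #{t : ZMod q | ZMod.castHom hd (ZMod d) t ∈ S} ≤ q / d * #S := by
  have card_kernel_le : #{t : ZMod q | (q / d) • t = 0} ≤ q / d :=
    IsAddCyclic.card_nsmul_eq_zero_le (Nat.div_pos (Nat.le_of_dvd (NeZero.pos q) hd)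
      (Nat.pos_of_dvd_of_pos hd (NeZero.pos q)))
  refine (card_le_card_mul_card_image_of_sub_mem (T := {t : ZMod q | (q / d) • t = 0})
    (f := ZMod.castHom hd (ZMod d)) fun x _ y _ hxy => ?_).trans
    (Nat.mul_le_mul card_kernel_le (Finset.card_le_card ?_))
  · have hdvd : d ∣ (x - y).val := by
      rw [← ZMod.natCast_eq_zero_iff, ← map_natCast (ZMod.castHom hd (ZMod d)),
        ZMod.natCast_zmod_val, map_sub, hxy, sub_self]
    rw [Finset.mem_filter, ← ZMod.natCast_zmod_val (x - y), nsmul_eq_mul, ← Nat.cast_mul,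
      ZMod.natCast_eq_zero_iff]
    exact ⟨Finset.mem_univ _, (Nat.div_mul_cancel hd).symm.dvd.trans (Nat.mul_dvd_mul_left _ hdvd)⟩
  · exact Finset.image_subset_iff.2 fun t ht => (Finset.mem_filter.1 ht).2

end Counting

section Zeros

variable {R₀ R : Type*} [CommRing R₀] [CommRing R] [Algebra R₀ R] {f : R₀[X]} {Δ : R₀}

theorem exists_mul_aeval_derivative_eq
    (hΔ : Polynomial.C Δ ∈ Ideal.span {f, Polynomial.derivative f}) {t : R}
    (ht : Polynomial.aeval t f = 0) :
    ∃ b : R, b * Polynomial.aeval t (Polynomial.derivative f) = algebraMap R₀ R Δ := by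
  obtain ⟨a, b, hab⟩ := Ideal.mem_span_pair.1 hΔ
  refine ⟨Polynomial.aeval t b, ?_⟩
  simpa [ht] using congrArg (Polynomial.aeval t) hab

theorem algebraMap_mul_sub_eq_zero [IsLocalRing R]
    (hΔ : Polynomial.C Δ ∈ Ideal.span {f, Polynomial.derivative f}) {x y z : R}
    (hx : Polynomial.aeval x f = 0) (hy : Polynomial.aeval y f = 0)
    (hxy : x - y = algebraMap R₀ R Δ * z) (hz : z ∈ nonunits R) :
    algebraMap R₀ R Δ * (x - y) = 0 := by
  obtain ⟨b, hb⟩ := exists_mul_aeval_derivative_eq hΔ hy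
  obtain ⟨r, hr⟩ := (f.map (algebraMap R₀ R)).binomExpansion y (x - y)
  rw [add_sub_cancel, Polynomial.derivative_map] at hr
  simp only [Polynomial.eval_map_algebraMap, hx, hy, zero_add] at hr
  have hunit : IsUnit (1 - -(b * r) * z) :=
    IsLocalRing.isUnit_one_sub_self_of_mem_nonunits _ (mul_mem_nonunits_right hz)
  rw [← hunit.mul_left_eq_zero]
  calc algebraMap R₀ R Δ * (x - y) * (1 - -(b * r) * z)
      = algebraMap R₀ R Δ * (x - y) + b * r * (x - y) * (algebraMap R₀ R Δ * z) := by ring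
    _ = b * (Polynomial.aeval y (Polynomial.derivative f) * (x - y) + r * (x - y) ^ 2) := by
        rw [← hxy, ← hb]; ring
    _ = 0 := by rw [← hr, mul_zero]

theorem card_aeval_eq_zero_le_natDegree [IsLocalRing R] [Fintype R] [DecidableEq R]
    (hΔ : Polynomial.C Δ ∈ Ideal.span {f, Polynomial.derivative f})
    (hunit : IsUnit (algebraMap R₀ R Δ)) : #{t : R | Polynomial.aeval t f = 0} ≤ f.natDegree := by
  classical
  set g := f.map (algebraMap R₀ (IsLocalRing.ResidueField R)) with hg
  have g_ne_zero : g ≠ 0 := by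
    intro g_eq_zero
    have aeval_eq_zero : Polynomial.aeval (0 : IsLocalRing.ResidueField R) f = 0 := by
      rw [← Polynomial.eval_map_algebraMap, ← hg, g_eq_zero, Polynomial.eval_zero]
    obtain ⟨b, hb⟩ := exists_mul_aeval_derivative_eq hΔ aeval_eq_zero
    rw [← Polynomial.eval_map_algebraMap, ← Polynomial.derivative_map, ← hg, g_eq_zero,
      Polynomial.derivative_zero, Polynomial.eval_zero, mul_zero,
      IsScalarTower.algebraMap_apply R₀ R] at hb
    exact (hunit.map _).ne_zero hb.symm
  have residue_mem_roots (t : R) (ht : Polynomial.aeval t f = 0) :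
      IsLocalRing.residue R t ∈ g.roots.toFinset := by
    rw [Multiset.mem_toFinset, Polynomial.mem_roots g_ne_zero, Polynomial.IsRoot,
      Polynomial.eval_map_algebraMap, ← IsLocalRing.ResidueField.algebraMap_eq,
      Polynomial.aeval_algebraMap_apply, ht, map_zero]
  calc #{t : R | Polynomial.aeval t f = 0} ≤ #g.roots.toFinset := by
        refine Finset.card_le_card_of_injOn (IsLocalRing.residue R)
          (fun t ht => residue_mem_roots t (Finset.mem_filter.1 ht).2) fun x hx y hy hxy => ?_
        have hmem : x - y ∈ nonunits R := by
          rwa [← IsLocalRing.mem_maximalIdeal, ← Ideal.Quotient.eq]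
        have hmul := algebraMap_mul_sub_eq_zero hΔ (Finset.mem_filter.1 hx).2
          (Finset.mem_filter.1 hy).2 (z := ↑hunit.unit⁻¹ * (x - y))
          (by rw [← mul_assoc, hunit.mul_val_inv, one_mul]) (mul_mem_nonunits_right hmem)
        exact sub_eq_zero.1 (hunit.mul_right_eq_zero.1 hmul)
    _ ≤ g.roots.card := Multiset.toFinset_card_le _
    _ ≤ f.natDegree := g.card_roots'.trans Polynomial.natDegree_map_le

theorem card_aeval_eq_zero_le_mul [IsLocalRing R] [Fintype R] [DecidableEq R]
    (hΔ : Polynomial.C Δ ∈ Ideal.span {f, Polynomial.derivative f})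
    (hunit : ¬ IsUnit (algebraMap R₀ R Δ)) :
    #{t : R | Polynomial.aeval t f = 0} ≤
      #{y : R | algebraMap R₀ R Δ * y = 0} * #{y : R | algebraMap R₀ R Δ ^ 2 * y = 0} := by
  classical
  have := Fintype.ofFinite (R ⧸ Ideal.span {algebraMap R₀ R Δ ^ 2})
  rw [← card_quotient_span_singleton (algebraMap R₀ R Δ ^ 2), Nat.card_eq_fintype_card]
  refine (card_le_card_mul_card_image_of_sub_mem
    (f := Ideal.Quotient.mk (Ideal.span {algebraMap R₀ R Δ ^ 2})) fun x hx y hy hxy => ?_).trans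
    (Nat.mul_le_mul_left _ (Finset.card_le_univ _))
  obtain ⟨z, hz⟩ := Ideal.mem_span_singleton.1 (Ideal.Quotient.eq.1 hxy)
  refine Finset.mem_filter.2 ⟨Finset.mem_univ _, algebraMap_mul_sub_eq_zero hΔ
    (Finset.mem_filter.1 hx).2 (Finset.mem_filter.1 hy).2 (z := algebraMap R₀ R Δ * z) ?_
    (mul_mem_nonunits_left hunit)⟩
  rw [hz, sq, mul_assoc]

end Zeros

section PrimePower

instance preValuationRing_zmod_prime_pow {p k : ℕ} [Fact p.Prime] :
    PreValuationRing (ZMod (p ^ k)) :=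
  (ZMod.ringHom_surjective (PadicInt.toZModPow (p := p) k)).preValuationRing
    (PadicInt.toZModPow k).toMonoidHom.toMulHom

theorem card_aeval_eq_zero_zmod_prime_pow_le {p : ℕ} [Fact p.Prime] {f : ℤ[X]} {Δ : ℤ}
    (hΔ0 : Δ ≠ 0) (hΔ : Polynomial.C Δ ∈ Ideal.span {f, Polynomial.derivative f}) (k : ℕ) :
    #{t : ZMod (p ^ k) | Polynomial.aeval t f = 0} ≤ f.natDegree + Δ.natAbs ^ 3 := by
  obtain rfl | hk := eq_or_ne k 0
  · refine (Finset.card_le_univ _).trans ?_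
    rw [ZMod.card, pow_zero]
    exact le_add_left (Nat.one_le_pow _ _ (Int.natAbs_pos.2 hΔ0))
  have : Fact (1 < p ^ k) := ⟨Nat.one_lt_pow hk (Fact.out : p.Prime).one_lt⟩
  by_cases hunit : IsUnit (algebraMap ℤ (ZMod (p ^ k)) Δ)
  · exact (card_aeval_eq_zero_le_natDegree hΔ hunit).trans (Nat.le_add_right _ _)
  refine ((card_aeval_eq_zero_le_mul hΔ hunit).trans ?_).trans (Nat.le_add_left _ _)
  rw [← map_pow, algebraMap_int_eq, eq_intCast, eq_intCast]
  calc _ ≤ Δ.natAbs * (Δ ^ 2).natAbs := Nat.mul_le_mul (card_intCast_mul_eq_zero_le hΔ0)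
        (card_intCast_mul_eq_zero_le (pow_ne_zero 2 hΔ0))
    _ = Δ.natAbs ^ 3 := by rw [Int.natAbs_pow]; ring

end PrimePower

theorem sum_card_aeval_mul_eq_zero_le {q B : ℕ} [NeZero q] {f : ℤ[X]}
    (hB : ∀ d [NeZero d], d ∣ q → #{t : ZMod d | Polynomial.aeval t f = 0} ≤ B) :
    ∑ t : ZMod q, #{y : ZMod q | Polynomial.aeval t f * y = 0} ≤ #q.divisors * (q * B) := by
  set g : ZMod q → ℕ := fun t => (Polynomial.aeval t f).val.gcd q
  have card_fiber_le (d : ℕ) (hd : d ∈ q.divisors) : #{t | g t = d} ≤ q / d * B := by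
    have hdq := Nat.dvd_of_mem_divisors hd
    have : NeZero d := ⟨(Nat.pos_of_mem_divisors hd).ne'⟩
    refine (Finset.card_le_card fun t ht => ?_).trans ((card_castHom_preimage_le hdq
      {t : ZMod d | Polynomial.aeval t f = 0}).trans (Nat.mul_le_mul_left _ (hB d hdq)))
    simp only [Finset.mem_filter, Finset.mem_univ, true_and] at ht ⊢
    rw [← RingHom.toIntAlgHom_apply, Polynomial.aeval_algHom_apply, RingHom.toIntAlgHom_apply,
      ← ZMod.natCast_zmod_val (Polynomial.aeval t f), map_natCast, ZMod.natCast_eq_zero_iff]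
    exact ht ▸ Nat.gcd_dvd_left _ _
  calc ∑ t : ZMod q, #{y : ZMod q | Polynomial.aeval t f * y = 0}
      ≤ ∑ t : ZMod q, g t := Finset.sum_le_sum fun t _ => card_mul_eq_zero_le_gcd _
    _ = ∑ d ∈ q.divisors, ∑ t with g t = d, g t :=
        (Finset.sum_fiberwise_of_maps_to (fun t _ => Nat.mem_divisors.2
          ⟨Nat.gcd_dvd_right _ _, NeZero.ne q⟩) g).symm
    _ = ∑ d ∈ q.divisors, #{t | g t = d} * d := Finset.sum_congr rfl fun _ _ =>
        Finset.sum_const_nat fun _ ht => (Finset.mem_filter.1 ht).2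
    _ ≤ ∑ _d ∈ q.divisors, q * B := Finset.sum_le_sum fun d hd => by
        refine (Nat.mul_le_mul_right d (card_fiber_le d hd)).trans_eq ?_
        rw [mul_right_comm, Nat.div_mul_cancel (Nat.dvd_of_mem_divisors hd)]
    _ = #q.divisors * (q * B) := by rw [Finset.sum_const, smul_eq_mul]

section Kernel

variable {n R : Type*} [Fintype n] [DecidableEq n] [CommRing R]

theorem adjugate_mul_eq_zero_of_mulVec_eq_zero {N : Matrix n n R} {h : n → R} (hN : N *ᵥ h = 0)
    {j : n} (hj : h j = 0) (i l : n) : N.adjugate j i * h l = 0 := by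
  have mulVec_updateRow : N.updateRow i (Pi.single j 1) *ᵥ h = 0 := by
    ext k
    obtain rfl | hk := eq_or_ne k i
    · simp [Matrix.mulVec, hj]
    · simpa [Matrix.mulVec, Matrix.updateRow_ne hk] using congrFun hN k
  have := congrFun (congrArg (· *ᵥ h) (N.updateRow i (Pi.single j 1)).adjugate_mul) l
  simpa [← Matrix.mulVec_mulVec, mulVec_updateRow, Matrix.smul_mulVec, Matrix.adjugate_apply]
    using this.symm

theorem det_mul_eq_zero_of_mulVec_eq_zero {N : Matrix n n R} {h : n → R} (hN : N *ᵥ h = 0)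
    (l : n) : N.det * h l = 0 := by
  have := congrFun (congrArg (· *ᵥ h) N.adjugate_mul) l
  simpa [← Matrix.mulVec_mulVec, hN, Matrix.smul_mulVec] using this.symm

theorem card_ker_le_of_adjugate_dvd [Fintype R] [DecidableEq R] {N : Matrix n n R} {i j : n}
    {c : R} (hc : N.adjugate j i ∣ c) :
    #{h | N *ᵥ h = 0} ≤ #{y | c * y = 0} ^ Fintype.card n * #{y | N.det * y = 0} := by
  obtain ⟨r, hr⟩ := hc
  let T : Finset (n → R) := Fintype.piFinset fun _ => {y | c * y = 0}
  calc #{h | N *ᵥ h = 0} ≤ #T * #(Finset.image (· j) {h | N *ᵥ h = 0}) := by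
        refine card_le_card_mul_card_image_of_sub_mem fun x hx y hy hxy => ?_
        have hN : N *ᵥ (x - y) = 0 := by
          rw [Matrix.mulVec_sub, (Finset.mem_filter.1 hx).2, (Finset.mem_filter.1 hy).2, sub_self]
        refine Fintype.mem_piFinset.2 fun l => Finset.mem_filter.2 ⟨Finset.mem_univ _, ?_⟩
        rw [hr, mul_right_comm, adjugate_mul_eq_zero_of_mulVec_eq_zero hN (sub_eq_zero.2 hxy),
          zero_mul]
    _ ≤ #T * #{y | N.det * y = 0} :=
        Nat.mul_le_mul_left _ <| Finset.card_le_card <| Finset.image_subset_iff.2 fun h hh =>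
          Finset.mem_filter.2 ⟨Finset.mem_univ _,
            det_mul_eq_zero_of_mulVec_eq_zero (Finset.mem_filter.1 hh).2 j⟩
    _ = _ := by rw [Fintype.card_piFinset, Finset.prod_const, Finset.card_univ]

theorem exists_adjugate_apply_dvd [PreValuationRing R] [Nonempty n] (N A : Matrix n n R)
    (a b : R) : ∃ j i, N.adjugate j i ∣ a * N.det + b * (N.adjugate * A).trace := by
  have : IsTrans R fun x y => y ∣ x := ⟨fun _ _ _ h₁ h₂ => h₂.trans h₁⟩
  have directed : Directed (fun x y : R => y ∣ x) fun ji : n × n => N.adjugate ji.1 ji.2 :=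
    fun x y => (ValuationRing.dvd_total (N.adjugate x.1 x.2) (N.adjugate y.1 y.2)).elim
      (fun h => ⟨x, dvd_rfl, h⟩) fun h => ⟨y, h, dvd_rfl⟩
  obtain ⟨⟨j, i⟩, hmin⟩ := directed.finset_le Finset.univ
  have dvd_adjugate (k l : n) : N.adjugate j i ∣ N.adjugate k l := hmin (k, l) (Finset.mem_univ _)
  refine ⟨j, i, dvd_add (dvd_mul_of_dvd_right ?_ a) (dvd_mul_of_dvd_right ?_ b)⟩
  · rw [N.det_eq_sum_mul_adjugate_row i]
    exact Finset.dvd_sum fun k _ => dvd_mul_of_dvd_right (dvd_adjugate k i) _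
  · exact Finset.dvd_sum fun k _ => Finset.dvd_sum fun l _ =>
      dvd_mul_of_dvd_left (dvd_adjugate k l) _

theorem card_ker_le [PreValuationRing R] [Fintype R] [DecidableEq R] (N A : Matrix n n R)
    (a b : R) : #{h | N *ᵥ h = 0} ≤
      #{y | (a * N.det + b * (N.adjugate * A).trace) * y = 0} ^ Fintype.card n *
        #{y | N.det * y = 0} := by
  cases isEmpty_or_nonempty n
  · refine Finset.card_le_one_of_subsingleton _ |>.trans ?_
    rw [Fintype.card_eq_zero, pow_zero, one_mul]
    exact Finset.card_pos.2 ⟨0, by simp⟩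
  · obtain ⟨j, i, hdvd⟩ := exists_adjugate_apply_dvd N A a b
    exact card_ker_le_of_adjugate_dvd hdvd

theorem natDegree_pencilDet_le (A B : Matrix n n R) :
    (pencilDet A B).natDegree ≤ Fintype.card n :=
  Polynomial.natDegree_det_X_add_C_le A B

theorem sum_card_ker_pencil_le {p : ℕ} [Fact p.Prime] {A B : Matrix n n ℤ} {Δ : ℤ} (hΔ0 : Δ ≠ 0)
    (hΔ : Polynomial.C Δ ∈ Ideal.span {pencilDet A B, Polynomial.derivative (pencilDet A B)})
    (k : ℕ) :
    ∑ t : ZMod (p ^ k), #{h | (t • A.map (Int.castRingHom (ZMod (p ^ k))) +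
        B.map (Int.castRingHom (ZMod (p ^ k)))) *ᵥ h = 0} ≤
      Δ.natAbs ^ Fintype.card n * (Fintype.card n + Δ.natAbs ^ 3) * ((k + 1) * p ^ k) := by
  have hp : p.Prime := Fact.out
  have card_zeros_le (d : ℕ) [NeZero d] (hd : d ∣ p ^ k) :
      #{t : ZMod d | Polynomial.aeval t (pencilDet A B) = 0} ≤
        Fintype.card n + Δ.natAbs ^ 3 := by
    obtain ⟨j, -, rfl⟩ := (Nat.dvd_prime_pow hp).1 hd
    exact (card_aeval_eq_zero_zmod_prime_pow_le hΔ0 hΔ j).trans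
      (Nat.add_le_add_right (natDegree_pencilDet_le A B) _)
  have card_ker_pencil_le (t : ZMod (p ^ k)) :
      #{h | (t • A.map (Int.castRingHom (ZMod (p ^ k))) +
        B.map (Int.castRingHom (ZMod (p ^ k)))) *ᵥ h = 0} ≤
      Δ.natAbs ^ Fintype.card n *
        #{y : ZMod (p ^ k) | Polynomial.aeval t (pencilDet A B) * y = 0} := by
    obtain ⟨a, b, hab⟩ := Ideal.mem_span_pair.1 hΔ
    have hab' := congrArg (Polynomial.aeval t) hab
    simp only [map_add, map_mul, aeval_pencilDet, aeval_derivative_pencilDet, Polynomial.aeval_C,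
      algebraMap_int_eq] at hab' ⊢
    refine (card_ker_le _ (A.map (Int.castRingHom _)) (Polynomial.aeval t a)
      (Polynomial.aeval t b)).trans (Nat.mul_le_mul_right _ (Nat.pow_le_pow_left ?_ _))
    rw [hab', eq_intCast]
    exact card_intCast_mul_eq_zero_le hΔ0
  calc _ ≤ ∑ t : ZMod (p ^ k), Δ.natAbs ^ Fintype.card n *
        #{y : ZMod (p ^ k) | Polynomial.aeval t (pencilDet A B) * y = 0} :=
        Finset.sum_le_sum fun t _ => card_ker_pencil_le t
    _ ≤ Δ.natAbs ^ Fintype.card n *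
        (#(p ^ k).divisors * (p ^ k * (Fintype.card n + Δ.natAbs ^ 3))) := by
        rw [← Finset.mul_sum]
        exact Nat.mul_le_mul_left _ (sum_card_aeval_mul_eq_zero_le card_zeros_le)
    _ = _ := by
        rw [Nat.divisors_prime_pow hp, Finset.card_map, Finset.card_range]
        ring

end Kernel

section PrimitiveKernel

variable {n : Type*} [Fintype n]

/-- The solutions `((x, y), h)` over `R` of `(x • A + y • B) *ᵥ h = 0` whose coefficient vector
`(x, y)` is unimodular. Over `ZMod q` this is the set counted after Weyl differencing. -/
def primitiveKernel (A B : Matrix n n ℤ) (R : Type*) [CommRing R] : Set ((R × R) × (n → R)) :=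
  {z | IsCoprime z.1.1 z.1.2 ∧
    (z.1.1 • A.map (Int.castRingHom R) + z.1.2 • B.map (Int.castRingHom R)) *ᵥ z.2 = 0}

variable {A B : Matrix n n ℤ} {R S : Type*} [CommRing R] [CommRing S]

theorem map_mem_primitiveKernel (φ : R →+* S) {z : (R × R) × (n → R)}
    (hz : z ∈ primitiveKernel A B R) : ((φ z.1.1, φ z.1.2), φ ∘ z.2) ∈ primitiveKernel A B S := by
  refine ⟨hz.1.map φ, ?_⟩
  ext i
  have := congrArg φ (congrFun hz.2 i)
  rw [RingHom.map_mulVec, Pi.zero_apply, map_zero] at this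
  rw [Pi.zero_apply, ← this]
  congr 2
  ext i j
  simp

variable (A B)

theorem ncard_primitiveKernel_mul_le {a b : ℕ} [NeZero a] [NeZero b] (hab : a.Coprime b) :
    (primitiveKernel A B (ZMod (a * b))).ncard ≤
      (primitiveKernel A B (ZMod a)).ncard * (primitiveKernel A B (ZMod b)).ncard := by
  let e := ZMod.chineseRemainder hab
  let φ : ZMod (a * b) →+* ZMod a := (RingHom.fst _ _).comp e.toRingHom
  let χ : ZMod (a * b) →+* ZMod b := (RingHom.snd _ _).comp e.toRingHom
  have eq_of_map_eq (x y : ZMod (a * b)) (hφ : φ x = φ y) (hχ : χ x = χ y) : x = y :=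
    e.injective (Prod.ext hφ hχ)
  rw [← Set.ncard_prod]
  refine Set.ncard_le_ncard_of_injOn
    (fun z => (((φ z.1.1, φ z.1.2), φ ∘ z.2), ((χ z.1.1, χ z.1.2), χ ∘ z.2)))
    (fun z hz => ⟨map_mem_primitiveKernel φ hz, map_mem_primitiveKernel χ hz⟩) ?_
    (Set.toFinite _)
  rintro ⟨⟨x, y⟩, v⟩ - ⟨⟨x', y'⟩, v'⟩ - hz
  simp only [Prod.mk.injEq] at hz ⊢
  obtain ⟨⟨⟨hx, hy⟩, hv⟩, ⟨hx', hy'⟩, hv'⟩ := hz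
  exact ⟨⟨eq_of_map_eq _ _ hx hx', eq_of_map_eq _ _ hy hy'⟩,
    funext fun i => eq_of_map_eq _ _ (congrFun hv i) (congrFun hv' i)⟩

theorem ncard_primitiveKernel [DecidableEq n] [Fintype R] [DecidableEq R]
    [DecidablePred fun x : R × R => IsCoprime x.1 x.2] :
    (primitiveKernel A B R).ncard = ∑ x : R × R with IsCoprime x.1 x.2,
      #{h | (x.1 • A.map (Int.castRingHom R) + x.2 • B.map (Int.castRingHom R)) *ᵥ h = 0} := by
  classical
  rw [Set.ncard_eq_toFinset_card', Finset.card_eq_sum_card_fiberwise (f := Prod.fst)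
    (t := {x : R × R | IsCoprime x.1 x.2})
    fun z hz => by simpa using (Set.mem_toFinset.1 hz).1]
  refine Finset.sum_congr rfl fun x hx => ?_
  rw [← Finset.card_map (Function.Embedding.sectR x (n → R))]
  congr 1
  ext z
  simp only [Finset.mem_filter, Set.mem_toFinset, Finset.mem_map, Finset.mem_univ, true_and,
    Function.Embedding.sectR_apply] at hx ⊢
  constructor
  · rintro ⟨hz, rfl⟩
    exact ⟨z.2, hz.2, rfl⟩
  · rintro ⟨h, hh, rfl⟩
    exact ⟨⟨hx, hh⟩, rfl⟩

variable {A B}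

theorem sum_card_ker_smul_add_smul_of_isUnit [DecidableEq n] [Fintype R] [DecidableEq R] {x : R}
    (hx : IsUnit x) (M N : Matrix n n R) :
    ∑ y : R, #{h | (x • M + y • N) *ᵥ h = 0} =
      ∑ t : R, #{h | (t • N + M) *ᵥ h = 0} := by
  obtain ⟨u, rfl⟩ := hx
  rw [← Equiv.sum_comp u.mulLeft fun y => #{h | ((u : R) • M + y • N) *ᵥ h = 0}]
  refine Finset.sum_congr rfl fun t _ => ?_
  congr 1
  ext h
  rw [Finset.mem_filter, Finset.mem_filter, Units.mulLeft_apply, mul_smul, ← smul_add,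
    Matrix.smul_mulVec, add_comm M]
  simp only [Finset.mem_univ, true_and]
  exact u.isUnit.smul_eq_zero

theorem ncard_primitiveKernel_le_of_isLocalRing [DecidableEq n] [IsLocalRing R] [Fintype R]
    [DecidableEq R] :
    (primitiveKernel A B R).ncard ≤ Fintype.card R *
      (∑ t : R, #{h | (t • B.map (Int.castRingHom R) + A.map (Int.castRingHom R)) *ᵥ h = 0} +
        ∑ t : R, #{h | (t • A.map (Int.castRingHom R) + B.map (Int.castRingHom R)) *ᵥ h = 0}) := by
  classical
  set A' := A.map (Int.castRingHom R)
  set B' := B.map (Int.castRingHom R)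
  let c (x y : R) : ℕ := #{h | (x • A' + y • B') *ᵥ h = 0}
  have indicator_le {x y : R} (hxy : IsCoprime x y) :
      c x y ≤ (if IsUnit x then c x y else 0) + if IsUnit y then c x y else 0 := by
    obtain ⟨a, b, hab⟩ := hxy
    obtain h | h := IsLocalRing.isUnit_or_isUnit_of_add_one hab
    · rw [if_pos (isUnit_of_mul_isUnit_right h)]
      exact Nat.le_add_right _ _
    · rw [if_pos (isUnit_of_mul_isUnit_right h)]
      exact Nat.le_add_left _ _
  have sum_left_le (x : R) : ∑ y, (if IsUnit x then c x y else 0) ≤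
      ∑ t : R, #{h | (t • B' + A') *ᵥ h = 0} := by
    split_ifs with hx
    · exact (sum_card_ker_smul_add_smul_of_isUnit hx A' B').le
    · simp
  have sum_right_le (y : R) : ∑ x, (if IsUnit y then c x y else 0) ≤
      ∑ t : R, #{h | (t • A' + B') *ᵥ h = 0} := by
    split_ifs with hy
    · simp only [c, fun x : R => add_comm (x • A') (y • B')]
      exact (sum_card_ker_smul_add_smul_of_isUnit hy B' A').le
    · simp
  calc (primitiveKernel A B R).ncard = ∑ x : R × R with IsCoprime x.1 x.2, c x.1 x.2 :=
        ncard_primitiveKernel A B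
    _ ≤ ∑ x : R × R,
        ((if IsUnit x.1 then c x.1 x.2 else 0) + if IsUnit x.2 then c x.1 x.2 else 0) :=
        (Finset.sum_le_sum fun x hx => indicator_le (Finset.mem_filter.1 hx).2).trans
          (Finset.sum_le_sum_of_subset (Finset.filter_subset _ _))
    _ = ∑ x, ∑ y, (if IsUnit x then c x y else 0) + ∑ y, ∑ x, if IsUnit y then c x y else 0 := by
        rw [Finset.sum_add_distrib, Fintype.sum_prod_type, Fintype.sum_prod_type_right]
    _ ≤ ∑ _x : R, ∑ t : R, #{h | (t • B' + A') *ᵥ h = 0} +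
        ∑ _y : R, ∑ t : R, #{h | (t • A' + B') *ᵥ h = 0} := Nat.add_le_add
        (Finset.sum_le_sum fun x _ => sum_left_le x) (Finset.sum_le_sum fun y _ => sum_right_le y)
    _ = _ := by rw [Finset.sum_const, Finset.sum_const, ← smul_add, smul_eq_mul, Finset.card_univ]

theorem NonsingularPair.exists_ncard_primitiveKernel_le {s : ℕ} {A B : Matrix (Fin s) (Fin s) ℤ}
    (hns : NonsingularPair s A B) (hA : A.IsSymm) (hB : B.IsSymm) :
    ∃ K : ℕ, ∀ (p : ℕ) [Fact p.Prime] (k : ℕ), k ≠ 0 →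
      (primitiveKernel A B (ZMod (p ^ k))).ncard ≤ K * (k + 1) * (p ^ k) ^ 2 := by
  obtain ⟨Δ₁, hΔ₁, hmem₁⟩ := hns.exists_C_mem_span hA hB
  obtain ⟨Δ₂, hΔ₂, hmem₂⟩ := hns.symm.exists_C_mem_span hB hA
  refine ⟨Δ₂.natAbs ^ s * (s + Δ₂.natAbs ^ 3) + Δ₁.natAbs ^ s * (s + Δ₁.natAbs ^ 3),
    fun p _ k hk => ?_⟩
  have : Fact (1 < p ^ k) := ⟨Nat.one_lt_pow hk (Fact.out : p.Prime).one_lt⟩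
  refine ncard_primitiveKernel_le_of_isLocalRing.trans ((Nat.mul_le_mul_left _ (Nat.add_le_add
    (sum_card_ker_pencil_le hΔ₂ hmem₂ k) (sum_card_ker_pencil_le hΔ₁ hmem₁ k))).trans_eq ?_)
  rw [ZMod.card, Fintype.card_fin]
  ring

end PrimitiveKernel

section DivisorBound

theorem exists_add_one_le_mul_pow {c : ℝ} (hc : 1 < c) :
    ∃ L : ℝ, ∀ k : ℕ, (k + 1 : ℝ) ≤ L * c ^ k := by
  have hc' : 0 < c - 1 := sub_pos.2 hc
  refine ⟨1 + (c - 1)⁻¹, fun k => ?_⟩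
  have bernoulli : 1 + k * (c - 1) ≤ c ^ k := by
    simpa using one_add_mul_le_pow (a := c - 1) (by linarith) k
  calc (k + 1 : ℝ) ≤ k + 1 + (k * (c - 1) + (c - 1)⁻¹) := le_add_of_nonneg_right (by positivity)
    _ = (1 + (c - 1)⁻¹) * (1 + k * (c - 1)) := by field_simp; ring
    _ ≤ (1 + (c - 1)⁻¹) * c ^ k := by gcongr

variable {f c : ℕ → ℝ} {δ K : ℝ}

theorem le_prod_primeFactors_mul_rpow (hf0 : ∀ q, 0 ≤ f q) (hf1 : f 1 ≤ 1)
    (hmul : ∀ a b : ℕ, 1 < a → 1 < b → a.Coprime b → f (a * b) ≤ f a * f b)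
    (hc : ∀ p k : ℕ, p.Prime → k ≠ 0 → f (p ^ k) ≤ c p * ((p ^ k : ℕ) : ℝ) ^ δ) {q : ℕ}
    (hq : q ≠ 0) : f q ≤ (∏ p ∈ q.primeFactors, c p) * (q : ℝ) ^ δ := by
  induction q using Nat.recOnPosPrimePosCoprime with
  | prime_pow p k hp hk =>
    rw [Nat.primeFactors_prime_pow hk.ne' hp, Finset.prod_singleton]
    exact hc p k hp hk.ne'
  | zero => exact absurd rfl hq
  | one => simpa using hf1
  | coprime a b ha hb hab iha ihb =>
    have hfa := iha (by omega)
    have hfb := ihb (by omega)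
    calc f (a * b) ≤ f a * f b := hmul a b ha hb hab
      _ ≤ _ := mul_le_mul hfa hfb (hf0 b) ((hf0 a).trans hfa)
      _ = _ := by
        rw [hab.primeFactors_mul, Finset.prod_union hab.disjoint_primeFactors, Nat.cast_mul,
          Real.mul_rpow a.cast_nonneg b.cast_nonneg, mul_mul_mul_comm]

theorem exists_mul_add_one_le_ite_mul_rpow (hK : 0 ≤ K) (hδ : 0 < δ) :
    ∃ (C : ℝ) (P : ℕ), 1 ≤ C ∧ ∀ p k : ℕ, p.Prime → k ≠ 0 →
      K * (k + 1) ≤ (if p < P then C else 1) * ((p ^ k : ℕ) : ℝ) ^ δ := by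
  obtain ⟨L, hL⟩ := exists_add_one_le_mul_pow (Real.one_lt_rpow one_lt_two hδ)
  obtain ⟨P, hP⟩ : ∃ P : ℕ, ∀ p : ℕ, P ≤ p → (K + 1) * 2 ≤ (p : ℝ) ^ δ :=
    Filter.eventually_atTop.1 (((tendsto_rpow_atTop hδ).comp
      tendsto_natCast_atTop_atTop).eventually_ge_atTop _)
  refine ⟨max 1 (K * L), P, le_max_left _ _, fun p k hp hk => ?_⟩
  rw [Nat.cast_pow, ← Real.rpow_pow_comm p.cast_nonneg]
  split_ifs with hpP
  · calc K * (k + 1) ≤ K * (L * (2 ^ δ) ^ k) := by gcongr; exact hL k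
      _ = K * L * (2 ^ δ) ^ k := (mul_assoc _ _ _).symm
      _ ≤ max 1 (K * L) * ((p : ℝ) ^ δ) ^ k := by
        gcongr
        · exact le_max_right _ _
        · exact_mod_cast hp.two_le
  · calc K * (k + 1) ≤ (K + 1) * 2 ^ k := by
          gcongr
          · exact le_add_of_nonneg_right zero_le_one
          · exact_mod_cast Nat.lt_two_pow_self
      _ ≤ (K + 1) ^ k * 2 ^ k := by
        gcongr
        exact le_self_pow₀ (le_add_of_nonneg_left hK) hk
      _ = ((K + 1) * 2) ^ k := (mul_pow _ _ _).symm
      _ ≤ 1 * ((p : ℝ) ^ δ) ^ k := by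
        rw [one_mul]
        gcongr
        exact hP p (not_lt.1 hpP)

theorem exists_le_rpow_of_submultiplicative (hf0 : ∀ q, 0 ≤ f q) (hf1 : f 1 ≤ 1)
    (hmul : ∀ a b : ℕ, 1 < a → 1 < b → a.Coprime b → f (a * b) ≤ f a * f b) (hK : 0 ≤ K)
    (hf : ∀ p k : ℕ, p.Prime → k ≠ 0 → f (p ^ k) ≤ K * (k + 1)) (hδ : 0 < δ) :
    ∃ C : ℝ, 0 < C ∧ ∀ q : ℕ, q ≠ 0 → f q ≤ C * (q : ℝ) ^ δ := by
  obtain ⟨C, P, hC, hCP⟩ := exists_mul_add_one_le_ite_mul_rpow hK hδ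
  refine ⟨C ^ P, pow_pos (zero_lt_one.trans_le hC) P, fun q hq =>
    (le_prod_primeFactors_mul_rpow hf0 hf1 hmul (c := fun p => if p < P then C else 1)
      (fun p k hp hk => (hf p k hp hk).trans (hCP p k hp hk)) hq).trans ?_⟩
  gcongr
  rw [← Finset.prod_filter, Finset.prod_const]
  refine pow_le_pow_right₀ hC ((Finset.card_le_card fun p hp => ?_).trans_eq (Finset.card_range P))
  exact Finset.mem_range.2 (Finset.mem_filter.1 hp).2

end DivisorBound

theorem NonsingularPair.exists_ncard_primitiveKernel_le_rpow {s : ℕ}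
    {A B : Matrix (Fin s) (Fin s) ℤ} (hns : NonsingularPair s A B) (hA : A.IsSymm) (hB : B.IsSymm)
    {δ : ℝ} (hδ : 0 < δ) :
    ∃ C : ℝ, 0 < C ∧ ∀ q : ℕ, q ≠ 0 →
      ((primitiveKernel A B (ZMod q)).ncard : ℝ) ≤ C * (q : ℝ) ^ (2 + δ) := by
  obtain ⟨K, hK⟩ := hns.exists_ncard_primitiveKernel_le hA hB
  obtain ⟨C, hC, hbound⟩ := exists_le_rpow_of_submultiplicative
    (f := fun q => (primitiveKernel A B (ZMod q)).ncard / (q : ℝ) ^ 2) (fun q => by positivity)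
    (by simpa using Set.ncard_le_one_of_subsingleton (primitiveKernel A B (ZMod 1)))
    (fun a b ha hb hab => by
      have : NeZero a := ⟨by omega⟩
      have : NeZero b := ⟨by omega⟩
      rw [div_mul_div_comm, Nat.cast_mul, mul_pow]
      gcongr
      exact_mod_cast ncard_primitiveKernel_mul_le A B hab)
    K.cast_nonneg
    (fun p k hp hk => by
      have : Fact p.Prime := ⟨hp⟩
      rw [div_le_iff₀ (pow_pos (Nat.cast_pos.2 (pow_pos hp.pos k)) 2)]
      exact_mod_cast hK p k hk)
    hδ
  refine ⟨C, hC, fun q hq => ?_⟩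
  have hq0 : (0 : ℝ) < q := Nat.cast_pos.2 (Nat.pos_of_ne_zero hq)
  have := (div_le_iff₀ (pow_pos hq0 2)).1 (hbound q hq)
  rwa [mul_assoc, ← Real.rpow_natCast, ← Real.rpow_add hq0, add_comm, Nat.cast_ofNat] at this

section WeylDifferencing

theorem normSq_sum_addChar {G R : Type*} [AddCommGroup G] [Fintype G] [CommRing R] [Finite R]
    (ψ : AddChar R ℂ) (Q : G → R) :
    ((‖∑ b, ψ (Q b)‖ ^ 2 : ℝ) : ℂ) = ∑ h, ∑ b, ψ (Q (h + b) - Q b) := by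
  calc ((‖∑ b, ψ (Q b)‖ ^ 2 : ℝ) : ℂ) = (∑ b, ψ (-Q b)) * ∑ h, ψ (Q h) := by
        rw [Complex.ofReal_pow, ← Complex.conj_mul', map_sum]
        simp only [AddChar.map_neg_eq_conj]
    _ = ∑ b, ∑ h, ψ (Q (h + b) - Q b) := by
        rw [Finset.sum_mul]
        refine Finset.sum_congr rfl fun b _ => ?_
        rw [Finset.mul_sum, ← Equiv.sum_comp (Equiv.addRight b)]
        refine Finset.sum_congr rfl fun h _ => ?_
        rw [← AddChar.map_add_eq_mul, neg_add_eq_sub, Equiv.coe_addRight]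
    _ = ∑ h, ∑ b, ψ (Q (h + b) - Q b) := Finset.sum_comm

variable {n R : Type*} [Fintype n] [DecidableEq n] [CommRing R] [Fintype R]

theorem sum_addChar_dotProduct_eq_zero {R' : Type*} [CommRing R'] [IsDomain R']
    {ψ : AddChar R R'} (hψ : ψ.IsPrimitive) {w : n → R} (hw : w ≠ 0) :
    ∑ b : n → R, ψ (b ⬝ᵥ w) = 0 := by
  obtain ⟨l, hl⟩ := Function.ne_iff.1 hw
  let φ : (n → R) →+ R :=
    { toFun := fun b => b ⬝ᵥ w
      map_zero' := zero_dotProduct w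
      map_add' := fun x y => add_dotProduct x y w }
  refine AddChar.sum_eq_zero_of_ne_one (ψ := ψ.compAddMonoidHom φ) fun h => hψ hl ?_
  ext t
  simpa [φ, mul_comm] using DFunLike.congr_fun h (Pi.single l t)

theorem normSq_sum_addChar_quadratic_le [DecidableEq R] {ψ : AddChar R ℂ} (hψ : ψ.IsPrimitive)
    (N : Matrix n n R) (u : n → R) :
    ‖∑ b : n → R, ψ (b ⬝ᵥ N *ᵥ b + b ⬝ᵥ u)‖ ^ 2 ≤
      (Fintype.card R : ℝ) ^ Fintype.card n * #{h : n → R | (N + Nᵀ) *ᵥ h = 0} := by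
  let Q : (n → R) → R := fun b => b ⬝ᵥ N *ᵥ b + b ⬝ᵥ u
  have difference (h b : n → R) : Q (h + b) - Q b = Q h + b ⬝ᵥ (N + Nᵀ) *ᵥ h := by
    have : h ⬝ᵥ N *ᵥ b = b ⬝ᵥ Nᵀ *ᵥ h := by
      rw [dotProduct_mulVec, ← mulVec_transpose, dotProduct_comm]
    simp only [Q, mulVec_add, add_dotProduct, dotProduct_add, add_mulVec, this]
    ring
  have norm_inner_sum_le (h : n → R) : ‖∑ b, ψ (Q (h + b) - Q b)‖ ≤
      if (N + Nᵀ) *ᵥ h = 0 then (Fintype.card R : ℝ) ^ Fintype.card n else 0 := by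
    simp only [difference, AddChar.map_add_eq_mul, ← Finset.mul_sum]
    rw [norm_mul, AddChar.norm_apply, one_mul]
    split_ifs with h0
    · simp [h0]
    · rw [sum_addChar_dotProduct_eq_zero hψ h0, norm_zero]
  calc ‖∑ b, ψ (Q b)‖ ^ 2 = ‖∑ h, ∑ b, ψ (Q (h + b) - Q b)‖ := by
        rw [← normSq_sum_addChar, Complex.norm_real, Real.norm_of_nonneg (by positivity)]
    _ ≤ ∑ h : n → R,
        if (N + Nᵀ) *ᵥ h = 0 then (Fintype.card R : ℝ) ^ Fintype.card n else 0 :=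
        norm_sum_le_of_le _ fun h _ => norm_inner_sum_le h
    _ = _ := by rw [← Finset.sum_filter, Finset.sum_const, nsmul_eq_mul, mul_comm]

end WeylDifferencing

section ExponentialSum

variable {q : ℕ}

theorem eqc_eq_stdAddChar [NeZero q] (m : ℤ) : eqc q m = ZMod.stdAddChar (m : ZMod q) := by
  rw [ZMod.stdAddChar_coe, eqc, e2pi]
  congr 1
  push_cast
  ring

theorem isCoprime_natCast_zmod_iff {x y : ℕ} :
    IsCoprime (x : ZMod q) (y : ZMod q) ↔ (x.gcd y).gcd q = 1 := by
  constructor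
  · intro h
    have := h.map (ZMod.castHom (Nat.gcd_dvd_right (x.gcd y) q) (ZMod ((x.gcd y).gcd q)))
    rw [map_natCast, map_natCast,
      (ZMod.natCast_eq_zero_iff _ _).2 ((Nat.gcd_dvd_left _ _).trans (Nat.gcd_dvd_left x y)),
      (ZMod.natCast_eq_zero_iff _ _).2 ((Nat.gcd_dvd_left _ _).trans (Nat.gcd_dvd_right x y)),
      isCoprime_zero_left, isUnit_zero_iff, eq_comm, ← Nat.cast_one, ZMod.natCast_eq_zero_iff,
      Nat.dvd_one] at this
    exact this
  · intro h
    obtain ⟨c, hc⟩ := ((ZMod.isUnit_iff_coprime (x.gcd y) q).2 h).exists_left_inv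
    have bezout := congrArg (Int.cast : ℤ → ZMod q) (Nat.gcd_eq_gcd_ab x y)
    push_cast at bezout
    refine ⟨c * Nat.gcdA x y, c * Nat.gcdB x y, ?_⟩
    rw [← hc, bezout]
    ring

variable [NeZero q]

theorem sum_residues [DecidablePred fun a : ZMod q × ZMod q => IsCoprime a.1 a.2]
    {M : Type*} [AddCommMonoid M] (g : ZMod q × ZMod q → M) :
    ∑ a ∈ residues q, g ((a.1 : ZMod q), (a.2 : ZMod q)) =
      ∑ a : ZMod q × ZMod q with IsCoprime a.1 a.2, g a := by
  refine Finset.sum_nbij' (fun a => ((a.1 : ZMod q), (a.2 : ZMod q)))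
    (fun a => (a.1.val, a.2.val)) (fun a ha => ?_) (fun a ha => ?_) (fun a ha => ?_)
    (fun a _ => by simp) (fun _ _ => rfl)
  · simpa [isCoprime_natCast_zmod_iff] using (Finset.mem_filter.1 ha).2
  · simpa [residues, ZMod.val_lt, ← isCoprime_natCast_zmod_iff] using ha
  · simp only [residues, Finset.mem_filter, Finset.mem_product, Finset.mem_range] at ha
    rw [ZMod.val_cast_of_lt ha.1.1, ZMod.val_cast_of_lt ha.1.2]

theorem sum_piFinset_range_natCast {ι M : Type*} [Fintype ι] [DecidableEq ι] [AddCommMonoid M]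
    (g : (ι → ZMod q) → M) :
    ∑ b ∈ Fintype.piFinset (fun _ : ι => Finset.range q), g (fun i => (b i : ZMod q)) =
      ∑ b, g b := by
  refine Finset.sum_nbij' (fun b i => (b i : ZMod q)) (fun b i => (b i).val) (fun b _ => by simp)
    (fun b _ => ?_) (fun b hb => ?_) (fun b _ => ?_) (fun b _ => rfl)
  · simp [Fintype.mem_piFinset, ZMod.val_lt]
  · ext i
    exact ZMod.val_cast_of_lt (Finset.mem_range.1 (Fintype.mem_piFinset.1 hb i))
  · ext i
    simp

variable {s : ℕ} (M₁ M₂ : Matrix (Fin s) (Fin s) ℤ) (u : Fin s → ℤ)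

theorem Dq_eq_sum_zmod [DecidablePred fun a : ZMod q × ZMod q => IsCoprime a.1 a.2] :
    Dq s M₁ M₂ q u = ∑ a : ZMod q × ZMod q with IsCoprime a.1 a.2, ∑ b : Fin s → ZMod q,
      ZMod.stdAddChar (b ⬝ᵥ (a.1 • M₁.map (Int.castRingHom (ZMod q)) +
        a.2 • M₂.map (Int.castRingHom (ZMod q))) *ᵥ b + b ⬝ᵥ fun i => (u i : ZMod q)) := by
  rw [← sum_residues]
  refine Finset.sum_congr rfl fun a _ => ?_
  rw [← sum_piFinset_range_natCast]
  refine Finset.sum_congr rfl fun b _ => ?_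
  rw [eqc_eq_stdAddChar, add_mulVec, smul_mulVec, smul_mulVec, dotProduct_add, dotProduct_smul,
    dotProduct_smul, ← quadEval_eq_dotProduct_mulVec, ← quadEval_eq_dotProduct_mulVec]
  simp only [quadEval, dotProduct, smul_eq_mul]
  push_cast
  rfl

theorem normSq_Dq_le : ‖Dq s M₁ M₂ q u‖ ^ 2 ≤
    (q : ℝ) ^ (s + 2) * (primitiveKernel (M₁ + M₁ᵀ) (M₂ + M₂ᵀ) (ZMod q)).ncard := by
  classical
  let N (a : ZMod q × ZMod q) : Matrix (Fin s) (Fin s) (ZMod q) :=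
    a.1 • M₁.map (Int.castRingHom (ZMod q)) + a.2 • M₂.map (Int.castRingHom (ZMod q))
  let S (a : ZMod q × ZMod q) : ℂ := ∑ b : Fin s → ZMod q,
    ZMod.stdAddChar (b ⬝ᵥ N a *ᵥ b + b ⬝ᵥ fun i => (u i : ZMod q))
  have N_add_transpose (a : ZMod q × ZMod q) : N a + (N a)ᵀ =
      a.1 • (M₁ + M₁ᵀ).map (Int.castRingHom (ZMod q)) +
        a.2 • (M₂ + M₂ᵀ).map (Int.castRingHom (ZMod q)) := by
    ext i j
    simp only [N, Matrix.add_apply, Matrix.transpose_apply, Matrix.smul_apply, Matrix.map_apply,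
      smul_eq_mul, map_add]
    ring
  have normSq_S_le (a : ZMod q × ZMod q) :
      ‖S a‖ ^ 2 ≤ (q : ℝ) ^ s * #{h | (N a + (N a)ᵀ) *ᵥ h = 0} := by
    simpa only [ZMod.card, Fintype.card_fin] using
      normSq_sum_addChar_quadratic_le (ZMod.isPrimitive_stdAddChar q) (N a) fun i => (u i : ZMod q)
  have card_coprime_le : (#{a : ZMod q × ZMod q | IsCoprime a.1 a.2} : ℝ) ≤ (q : ℝ) ^ 2 := by
    refine (Nat.cast_le.2 (Finset.card_le_univ _)).trans_eq ?_
    rw [Fintype.card_prod, ZMod.card, Nat.cast_mul, sq]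
  calc ‖Dq s M₁ M₂ q u‖ ^ 2 ≤ (∑ a : ZMod q × ZMod q with IsCoprime a.1 a.2, ‖S a‖) ^ 2 := by
        rw [Dq_eq_sum_zmod]
        gcongr
        exact norm_sum_le _ _
    _ ≤ #{a : ZMod q × ZMod q | IsCoprime a.1 a.2} *
        ∑ a : ZMod q × ZMod q with IsCoprime a.1 a.2, ‖S a‖ ^ 2 := sq_sum_le_card_mul_sum_sq
    _ ≤ (q : ℝ) ^ 2 * ∑ a : ZMod q × ZMod q with IsCoprime a.1 a.2,
        (q : ℝ) ^ s * #{h | (N a + (N a)ᵀ) *ᵥ h = 0} := by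
        gcongr with a
        exact normSq_S_le a
    _ = _ := by
        simp only [ncard_primitiveKernel, N_add_transpose, ← Finset.mul_sum, Nat.cast_sum]
        ring

end ExponentialSum

theorem NonsingularPair.smul {s : ℕ} {A B : Matrix (Fin s) (Fin s) ℤ}
    (hns : NonsingularPair s A B) {c : ℤ} (hc : c ≠ 0) : NonsingularPair s (c • A) (c • B) := by
  have hc' : (c : ℂ) ≠ 0 := Int.cast_ne_zero.2 hc
  have map_smul (M : Matrix (Fin s) (Fin s) ℤ) : (c • M).map (fun z : ℤ => (z : ℂ)) =
      (c : ℂ) • M.map (fun z : ℤ => (z : ℂ)) := by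
    ext i j
    simp only [Matrix.map_apply, Matrix.smul_apply, smul_eq_mul, Int.cast_mul]
  have quadEval_smul (M : Matrix (Fin s) (Fin s) ℤ) (x : Fin s → ℂ) :
      quadEval (c • M) x = c * quadEval M x := by
    simp only [quadEval, Matrix.smul_apply, smul_eq_mul, Int.cast_mul, Finset.mul_sum, mul_assoc]
  intro x hx hA hB
  rw [quadEval_smul, mul_eq_zero_iff_left hc'] at hA hB
  rw [map_smul, map_smul, smul_mulVec, smul_mulVec,
    LinearIndependent.pair_smul_iff hc']
  exact hns x hx hA hB

theorem NonsingularPair.add_transpose {s : ℕ} {A B : Matrix (Fin s) (Fin s) ℤ}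
    (hns : NonsingularPair s A B) (hA : A.IsSymm) (hB : B.IsSymm) :
    NonsingularPair s (A + Aᵀ) (B + Bᵀ) := by
  rw [hA.eq, hB.eq, ← two_smul ℤ A, ← two_smul ℤ B]
  exact hns.smul two_ne_zero

theorem statement16_general (s : ℕ) (M₁ M₂ : Matrix (Fin s) (Fin s) ℤ)
    (hns : NonsingularPair s (M₁ + M₁ᵀ) (M₂ + M₂ᵀ)) :
    ∀ ε : ℝ, 0 < ε → ∃ C : ℝ, 0 < C ∧ ∀ q : ℕ, 1 ≤ q → ∀ u : Fin s → ℤ,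
      ‖Dq s M₁ M₂ q u‖ ≤ C * (q : ℝ) ^ ((s : ℝ) / 2 + 2 + ε) := by
  intro ε hε
  obtain ⟨C, hC, hbound⟩ := hns.exists_ncard_primitiveKernel_le_rpow
    (Matrix.isSymm_add_transpose_self M₁) (Matrix.isSymm_add_transpose_self M₂)
    (mul_pos two_pos hε)
  refine ⟨√C, Real.sqrt_pos.2 hC, fun q hq u => ?_⟩
  have : NeZero q := ⟨by omega⟩
  have hq0 : (0 : ℝ) < q := Nat.cast_pos.2 hq
  refine le_of_sq_le_sq ?_ (by positivity)
  calc ‖Dq s M₁ M₂ q u‖ ^ 2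
      ≤ (q : ℝ) ^ (s + 2) * (primitiveKernel (M₁ + M₁ᵀ) (M₂ + M₂ᵀ) (ZMod q)).ncard :=
        normSq_Dq_le M₁ M₂ u
    _ ≤ (q : ℝ) ^ (s + 2) * (C * (q : ℝ) ^ (2 + 2 * ε)) := by
        gcongr
        exact hbound q (NeZero.ne q)
    _ = (√C * (q : ℝ) ^ ((s : ℝ) / 2 + 2 + ε)) ^ 2 := by
        rw [mul_pow, Real.sq_sqrt hC.le, ← Real.rpow_natCast, ← Real.rpow_natCast,
          ← Real.rpow_mul hq0.le, mul_left_comm, ← Real.rpow_add hq0]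
        congr 2
        push_cast
        ring

/-- `D_q(u) ≪_ε q^{s/2+2+ε}` (Lemma 6.4). -/
theorem statement16 (s : ℕ) (M₁ M₂ : Matrix (Fin s) (Fin s) ℤ)
    (hM₁ : M₁.IsSymm) (hM₂ : M₂.IsSymm) (hns : NonsingularPair s M₁ M₂) :
    ∀ ε : ℝ, 0 < ε → ∃ C : ℝ, 0 < C ∧ ∀ q : ℕ, 1 ≤ q → ∀ u : Fin s → ℤ,
      ‖Dq s M₁ M₂ q u‖ ≤ C * (q : ℝ) ^ ((s : ℝ) / 2 + 2 + ε) :=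
  statement16_general s M₁ M₂ (hns.add_transpose hM₁ hM₂)
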